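/- Let a ≥ b > 0, K* = (0,a) × (0,b), w(x,y) = (x − a/2)(y − b/2)/(ab), S(w) = w(0,0)² + w(a,0)² + w(a,b)² + w(0,b)², and λ₁ = a²/12, λ₂ = b²/12. Then the two-sided bound (2/3)√(λ₂/λ₁) · S(w) ≤ |w|²_{H¹(K*)} ≤ (2/3)√(λ₁/λ₂) · S(w) holds. -/

import Mathlib

open MeasureTheory Matrix

/-- The open rectangle `K* = (0,a) × (0,b) ⊆ ℝ²`. -/
def rect (a b : ℝ) : Set (Fin 2 → ℝ) :=
  {x | 0 < x 0 ∧ x 0 < a ∧ 0 < x 1 ∧ x 1 < b}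

/-- The function `w(x,y) = (x − a/2)(y − b/2)/(ab)`. -/
noncomputable def wfun (a b : ℝ) : (Fin 2 → ℝ) → ℝ :=
  fun x => (x 0 - a / 2) * (x 1 - b / 2) / (a * b)

/-- Gradient of a scalar function on `ℝ²`, as the vector of partial derivatives. -/
noncomputable def grad (v : (Fin 2 → ℝ) → ℝ) (x : Fin 2 → ℝ) : Fin 2 → ℝ :=
  fun i => fderiv ℝ v x (Pi.single i 1)

/-- The stabilization term `S(v)`: the sum of the squared values of `v` at the four
vertices `(0,0), (a,0), (a,b), (0,b)` of the rectangle `(0,a) × (0,b)`. -/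
noncomputable def stab (a b : ℝ) (v : (Fin 2 → ℝ) → ℝ) : ℝ :=
  v ![0, 0] ^ 2 + v ![a, 0] ^ 2 + v ![a, b] ^ 2 + v ![0, b] ^ 2

/-- The sum of squared partial derivatives of `wfun`. -/
theorem sum_grad_wfun_sq (a b : ℝ) (x : Fin 2 → ℝ) :
    ∑ i, (grad (wfun a b) x i) ^ 2
      = ((x 1 - b / 2) ^ 2 + (x 0 - a / 2) ^ 2) / (a * b) ^ 2 := by
  have h0 : HasFDerivAt (fun x : Fin 2 → ℝ => x 0 - a / 2)
      (ContinuousLinearMap.proj (R := ℝ) (φ := fun _ : Fin 2 => ℝ) 0) x :=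
    (hasFDerivAt_apply 0 x).sub_const _
  have h1 : HasFDerivAt (fun x : Fin 2 → ℝ => x 1 - b / 2)
      (ContinuousLinearMap.proj (R := ℝ) (φ := fun _ : Fin 2 => ℝ) 1) x :=
    (hasFDerivAt_apply 1 x).sub_const _
  have hw : HasFDerivAt (wfun a b) _ x := (h0.mul h1).mul_const (a * b)⁻¹
  simp only [grad, hw.fderiv, Fin.sum_univ_two]
  simp
  ring

/-- The squared `H¹` seminorm of `wfun` on the rectangle. -/
theorem integral_sum_grad_wfun_sq {a b : ℝ} (ha : 0 < a) (hb : 0 < b) :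
    ∫ x in rect a b, ∑ i, (grad (wfun a b) x i) ^ 2 = (b / a + a / b) / 12 := by
  have hpre : rect a b
      = MeasurableEquiv.finTwoArrow ⁻¹' (Set.Ioo 0 a ×ˢ Set.Ioo 0 b) := by
    ext x
    simp [rect, and_assoc]
  have hmoment (c : ℝ) (hc : 0 < c) :
      ∫ t in Set.Ioo 0 c, (t - c / 2) ^ 2 = c ^ 3 / 12 := by
    rw [← integral_Ioc_eq_integral_Ioo, ← intervalIntegral.integral_of_le hc.le,
      intervalIntegral.integral_comp_sub_right (fun t => t ^ 2), integral_pow]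
    ring
  have hint (c d : ℝ) : IntegrableOn (fun t : ℝ => (t - d) ^ 2) (Set.Ioo 0 c) :=
    ((by fun_prop : Continuous fun t : ℝ => (t - d) ^ 2).integrableOn_Icc
      (a := 0) (b := c)).mono_set Set.Ioo_subset_Icc_self
  have hcont : Continuous fun p : ℝ × ℝ => (p.2 - b / 2) ^ 2 + (p.1 - a / 2) ^ 2 := by
    fun_prop
  have hprod : IntegrableOn (fun p : ℝ × ℝ => (p.2 - b / 2) ^ 2 + (p.1 - a / 2) ^ 2)
      (Set.Ioo 0 a ×ˢ Set.Ioo 0 b) (volume.prod volume) :=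
    (hcont.continuousOn.integrableOn_compact (isCompact_Icc.prod isCompact_Icc)).mono_set
      (Set.prod_mono Set.Ioo_subset_Icc_self Set.Ioo_subset_Icc_self)
  simp_rw [sum_grad_wfun_sq]
  rw [integral_div]
  have htransfer := (volume_preserving_finTwoArrow ℝ).setIntegral_preimage_emb
    MeasurableEquiv.finTwoArrow.measurableEmbedding
    (fun p : ℝ × ℝ => (p.2 - b / 2) ^ 2 + (p.1 - a / 2) ^ 2)
    (Set.Ioo 0 a ×ˢ Set.Ioo 0 b)
  rw [← hpre] at htransfer
  simp only [MeasurableEquiv.finTwoArrow_apply] at htransfer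
  have hinner (x : ℝ) : ∫ y in Set.Ioo 0 b, ((y - b / 2) ^ 2 + (x - a / 2) ^ 2)
      = b ^ 3 / 12 + b * (x - a / 2) ^ 2 := by
    rw [integral_add (hint b _) (integrable_const _), hmoment b hb]
    simp [hb.le]
  rw [htransfer, Measure.volume_eq_prod, setIntegral_prod _ hprod]
  simp_rw [hinner]
  rw [integral_add (integrable_const _) ((hint a _).const_mul b), integral_const_mul,
    hmoment a ha]
  simp [ha.le]
  field_simp

/-- The stabilization term of `wfun`. -/
theorem stab_wfun {a b : ℝ} (ha : a ≠ 0) (hb : b ≠ 0) : stab a b (wfun a b) = 1 / 4 := by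
  simp [stab, wfun]
  field_simp
  ring

/-- The square root of the ratio of the eigenvalues `c² / 12` and `d² / 12`. -/
theorem sqrt_eigenvalue_ratio {c d : ℝ} (hc : 0 ≤ c) (hd : 0 ≤ d) :
    Real.sqrt ((c ^ 2 / 12) / (d ^ 2 / 12)) = c / d := by
  rw [div_div_div_cancel_right₀ (by norm_num), ← div_pow, Real.sqrt_sq (div_nonneg hc hd)]

/-- With `λ₁ = a²/12`, `λ₂ = b²/12`, the two-sided bound
`(2/3)√(λ₂/λ₁) S(w) ≤ |w|²_{H¹(K*)} ≤ (2/3)√(λ₁/λ₂) S(w)` holds. -/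
theorem stab_two_sided_bound_wfun (a b : ℝ) (hb : 0 < b) (hba : b ≤ a) :
    (2 / 3) * Real.sqrt ((b ^ 2 / 12) / (a ^ 2 / 12)) * stab a b (wfun a b)
        ≤ (∫ x in rect a b, ∑ i, (grad (wfun a b) x i) ^ 2)
    ∧ (∫ x in rect a b, ∑ i, (grad (wfun a b) x i) ^ 2)
        ≤ (2 / 3) * Real.sqrt ((a ^ 2 / 12) / (b ^ 2 / 12)) * stab a b (wfun a b) := by
  have ha : 0 < a := hb.trans_le hba
  rw [integral_sum_grad_wfun_sq ha hb, stab_wfun ha.ne' hb.ne',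
    sqrt_eigenvalue_ratio hb.le ha.le, sqrt_eigenvalue_ratio ha.le hb.le]
  have h : b / a ≤ a / b :=
    ((div_le_one ha).2 hba).trans ((one_le_div hb).2 hba)
  constructor <;> linarith
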